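/- arXiv:1206.6517 — 2 statements merged into one kernel-verified Lean document; each statement's English description precedes it below -/
import Mathlib

section
/- Let 𝒱 be the ℚ-vector space of functions from the set of lines to ℚ, for each triangle T let χ_T ∈ 𝒱 be its indicator function, and let 𝒱_tet ⊆ 𝒱 be the span of the 45 vectors χ_T. Then the subspace {v ∈ 𝒱_tet : Σ_L v(L) = 0} (the intersection of 𝒱_tet with the kernel of the coordinate-sum linear functional) has dimension exactly 20. -/
/-- The symmetric bilinear form of signature (1,6) on the lattice `Fin 7 → ℤ`,
modelling the Picard lattice of a smooth cubic surface. -/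
def B (x y : Fin 7 → ℤ) : ℤ :=
  x 0 * y 0 - x 1 * y 1 - x 2 * y 2 - x 3 * y 3 - x 4 * y 4 - x 5 * y 5 - x 6 * y 6

/-- The canonical class `K = (-3,1,1,1,1,1,1)`. -/
def K : Fin 7 → ℤ := ![-3, 1, 1, 1, 1, 1, 1]

/-- A line is a vector `L` with `⟨L,L⟩ = -1` and `⟨L,K⟩ = -1`. -/
def IsLine (L : Fin 7 → ℤ) : Prop := B L L = -1 ∧ B L K = -1

/-- A triangle is a 3-element set of (pairwise distinct) lines summing to `-K`. -/
def IsTriangle (T : Finset (Fin 7 → ℤ)) : Prop :=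
  T.card = 3 ∧ (∀ L ∈ T, IsLine L) ∧ ∑ L ∈ T, L = -K

/-- The ℚ-vector space of functions from the set of lines to ℚ. -/
abbrev Vq : Type := {L : Fin 7 → ℤ // IsLine L} → ℚ

/-- The indicator function of a triangle: value 1 at each of its lines, 0 elsewhere. -/
def chi (T : Finset (Fin 7 → ℤ)) : Vq :=
  fun L => if (L : Fin 7 → ℤ) ∈ T then 1 else 0

/-- The span of the 45 indicator vectors of triangles. -/
def Vtet : Submodule ℚ Vq := Submodule.span ℚ (chi '' {T | IsTriangle T})

/-- The 27 lines. -/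
def lineVec : Fin 27 → (Fin 7 → ℤ) := ![
  ![0, 0, 0, 0, 0, 0, 1],
  ![0, 0, 0, 0, 0, 1, 0],
  ![0, 0, 0, 0, 1, 0, 0],
  ![0, 0, 0, 1, 0, 0, 0],
  ![0, 0, 1, 0, 0, 0, 0],
  ![0, 1, 0, 0, 0, 0, 0],
  ![1, -1, -1, 0, 0, 0, 0],
  ![1, -1, 0, -1, 0, 0, 0],
  ![1, -1, 0, 0, -1, 0, 0],
  ![1, -1, 0, 0, 0, -1, 0],
  ![1, -1, 0, 0, 0, 0, -1],
  ![1, 0, -1, -1, 0, 0, 0],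
  ![1, 0, -1, 0, -1, 0, 0],
  ![1, 0, -1, 0, 0, -1, 0],
  ![1, 0, -1, 0, 0, 0, -1],
  ![1, 0, 0, -1, -1, 0, 0],
  ![1, 0, 0, -1, 0, -1, 0],
  ![1, 0, 0, -1, 0, 0, -1],
  ![1, 0, 0, 0, -1, -1, 0],
  ![1, 0, 0, 0, -1, 0, -1],
  ![1, 0, 0, 0, 0, -1, -1],
  ![2, -1, -1, -1, -1, -1, 0],
  ![2, -1, -1, -1, -1, 0, -1],
  ![2, -1, -1, -1, 0, -1, -1],
  ![2, -1, -1, 0, -1, -1, -1],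
  ![2, -1, 0, -1, -1, -1, -1],
  ![2, 0, -1, -1, -1, -1, -1]]

/-- The 45 triangles, as triples of indices of lines. -/
def tri : Fin 45 → Fin 27 × Fin 27 × Fin 27 := ![
  (0, 10, 26), (0, 14, 25), (0, 17, 24), (0, 19, 23), (0, 20, 22),
  (1, 9, 26), (1, 13, 25), (1, 16, 24), (1, 18, 23), (1, 20, 21),
  (2, 8, 26), (2, 12, 25), (2, 15, 24), (2, 18, 22), (2, 19, 21),
  (3, 7, 26), (3, 11, 25), (3, 15, 23), (3, 16, 22), (3, 17, 21),
  (4, 6, 26), (4, 11, 24), (4, 12, 23), (4, 13, 22), (4, 14, 21),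
  (5, 6, 25), (5, 7, 24), (5, 8, 23), (5, 9, 22), (5, 10, 21),
  (6, 15, 20), (6, 16, 19), (6, 17, 18), (7, 12, 20), (7, 13, 19),
  (7, 14, 18), (8, 11, 20), (8, 13, 17), (8, 14, 16), (9, 11, 19),
  (9, 12, 17), (9, 14, 15), (10, 11, 18), (10, 12, 16), (10, 13, 15)]

instance (L : Fin 7 → ℤ) : Decidable (IsLine L) := by unfold IsLine; infer_instance

/-- The triangle with a given number, as a set of vectors. -/
def triSet (t : Fin 45) : Finset (Fin 7 → ℤ) :=
  {lineVec (tri t).1, lineVec (tri t).2.1, lineVec (tri t).2.2}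

theorem lineVec_isLine : ∀ i, IsLine (lineVec i) := by decide +kernel

theorem lineVec_inj : Function.Injective lineVec := by
  have h : ∀ i j, lineVec i = lineVec j → i = j := by decide +kernel
  exact fun i j => h i j

theorem triSet_isTriangle (t : Fin 45) : IsTriangle (triSet t) := by
  have h : ∀ t, (triSet t).card = 3 ∧ (∀ L ∈ triSet t, IsLine L) ∧ ∑ L ∈ triSet t, L = -K := by
    decide +kernel
  exact h t

/-- Membership of a line index in a triangle. -/
def inTri (t : Fin 45) (i : Fin 27) : Bool :=
  i == (tri t).1 || i == (tri t).2.1 || i == (tri t).2.2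

theorem mem_triSet (t : Fin 45) (i : Fin 27) : lineVec i ∈ triSet t ↔ inTri t i = true := by
  simp [triSet, inTri, lineVec_inj.eq_iff, or_assoc]

/-- The key matrix identity: `N Nᵀ = 6 I + Gram`. -/
theorem gram_identity : ∀ i j : Fin 27,
    ∑ t : Fin 45, (if inTri t i && inTri t j then (1 : ℤ) else 0)
      = (if i = j then 6 else 0) + B (lineVec i) (lineVec j) := by
  decide +kernel

theorem enum_lines : ∀ a ∈ [(0 : ℤ), 1, 2], ∀ x1 ∈ [(-1 : ℤ), 0, 1], ∀ x2 ∈ [(-1 : ℤ), 0, 1],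
    ∀ x3 ∈ [(-1 : ℤ), 0, 1], ∀ x4 ∈ [(-1 : ℤ), 0, 1], ∀ x5 ∈ [(-1 : ℤ), 0, 1],
    ∀ x6 ∈ [(-1 : ℤ), 0, 1], IsLine ![a, x1, x2, x3, x4, x5, x6] →
      ∃ i, lineVec i = ![a, x1, x2, x3, x4, x5, x6] := by
  decide +kernel

theorem mem_small {x : ℤ} (h1 : -1 ≤ x) (h2 : x ≤ 1) : x ∈ [(-1 : ℤ), 0, 1] := by
  simp only [List.mem_cons, List.not_mem_nil, or_false]
  omega

theorem sq_sub_nonneg (x : ℤ) : 0 ≤ x * x - x := by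
  rcases le_or_gt x 0 with h | h <;> nlinarith

theorem small_of_sub {x : ℤ} (h : x * x - x ≤ 0) : x ∈ [(-1 : ℤ), 0, 1] :=
  mem_small (by nlinarith) (by nlinarith)

theorem sq_add_nonneg (x : ℤ) : 0 ≤ x * x + x := by
  have := sq_sub_nonneg (-x); linarith

theorem small_of_add {x : ℤ} (h : x * x + x ≤ 0) : x ∈ [(-1 : ℤ), 0, 1] :=
  mem_small (by nlinarith) (by nlinarith)

theorem exists_lineVec (L : Fin 7 → ℤ) (hL : IsLine L) : ∃ i, lineVec i = L := by
  have e : L = ![L 0, L 1, L 2, L 3, L 4, L 5, L 6] := by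
    funext i; fin_cases i <;> rfl
  obtain ⟨h1, h2⟩ := id hL
  rw [e] at hL ⊢
  have k : ∀ x : Fin 7 → ℤ, B x K
      = -3 * x 0 - x 1 - x 2 - x 3 - x 4 - x 5 - x 6 := by
    intro x; simp [B, K]; ring
  rw [k] at h2
  unfold B at h1
  generalize L 0 = a at *
  generalize L 1 = b1 at *
  generalize L 2 = b2 at *
  generalize L 3 = b3 at *
  generalize L 4 = b4 at *
  generalize L 5 = b5 at *
  generalize L 6 = b6 at *
  have hq : 3 * (a * a) - 6 * a - 5 ≤ 0 := by
    have hs : b1 + b2 + b3 + b4 + b5 + b6 = 1 - 3 * a := by linarith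
    have hs2 : (b1 + b2 + b3 + b4 + b5 + b6) ^ 2 = (1 - 3 * a) ^ 2 := by rw [hs]
    nlinarith [sq_nonneg (b1 - b2), sq_nonneg (b1 - b3), sq_nonneg (b1 - b4),
      sq_nonneg (b1 - b5), sq_nonneg (b1 - b6), sq_nonneg (b2 - b3), sq_nonneg (b2 - b4),
      sq_nonneg (b2 - b5), sq_nonneg (b2 - b6), sq_nonneg (b3 - b4), sq_nonneg (b3 - b5),
      sq_nonneg (b3 - b6), sq_nonneg (b4 - b5), sq_nonneg (b4 - b6), sq_nonneg (b5 - b6)]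
  have ha0 : 0 ≤ a := by
    by_contra h
    nlinarith
  have ha2 : a ≤ 2 := by
    by_contra h
    nlinarith
  have ha : a ∈ [(0 : ℤ), 1, 2] := by
    simp only [List.mem_cons, List.not_mem_nil, or_false]
    omega
  rcases eq_or_lt_of_le ha0 with h0 | h0
  · subst h0
    have p1 := sq_sub_nonneg b1
    have p2 := sq_sub_nonneg b2
    have p3 := sq_sub_nonneg b3
    have p4 := sq_sub_nonneg b4
    have p5 := sq_sub_nonneg b5
    have p6 := sq_sub_nonneg b6
    exact enum_lines _ ha _ (small_of_sub (by linarith)) _ (small_of_sub (by linarith))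
      _ (small_of_sub (by linarith)) _ (small_of_sub (by linarith))
      _ (small_of_sub (by linarith)) _ (small_of_sub (by linarith)) hL
  · have p1 := sq_add_nonneg b1
    have p2 := sq_add_nonneg b2
    have p3 := sq_add_nonneg b3
    have p4 := sq_add_nonneg b4
    have p5 := sq_add_nonneg b5
    have p6 := sq_add_nonneg b6
    have haa : a * a - 3 * a + 2 ≤ 0 := by nlinarith
    exact enum_lines _ ha _ (small_of_add (by linarith)) _ (small_of_add (by linarith))
      _ (small_of_add (by linarith)) _ (small_of_add (by linarith))
      _ (small_of_add (by linarith)) _ (small_of_add (by linarith)) hL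

/-- The 27 lines are indexed by `Fin 27`. -/
noncomputable def lineEquiv : Fin 27 ≃ {L : Fin 7 → ℤ // IsLine L} :=
  Equiv.ofBijective (fun i => ⟨lineVec i, lineVec_isLine i⟩)
    ⟨fun _ _ h => lineVec_inj (congrArg Subtype.val h),
     fun L => (exists_lineVec L.1 L.2).imp fun _ h => Subtype.ext h⟩

theorem lineEquiv_val (i : Fin 27) : (lineEquiv i : Fin 7 → ℤ) = lineVec i := rfl

noncomputable instance lineFintype : Fintype {L : Fin 7 → ℤ // IsLine L} :=
  Fintype.ofEquiv _ lineEquiv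

/-- The class map `v ↦ ∑ v(L) L`. -/
noncomputable def classMap : Vq →ₗ[ℚ] (Fin 7 → ℚ) where
  toFun v := fun k => ∑ L, v L * ((L : Fin 7 → ℤ) k : ℚ)
  map_add' v w := by
    funext k; simp [add_mul, Finset.sum_add_distrib]
  map_smul' c v := by
    funext k; simp [Finset.mul_sum, mul_assoc]

theorem classMap_apply (v : Vq) (k : Fin 7) :
    classMap v k = ∑ L, v L * ((L : Fin 7 → ℤ) k : ℚ) := rfl

theorem sum_form (v : Vq) (y : Fin 7 → ℤ) :
    ∑ L, v L * (B L y : ℚ) = classMap v 0 * y 0 - classMap v 1 * y 1 - classMap v 2 * y 2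
      - classMap v 3 * y 3 - classMap v 4 * y 4 - classMap v 5 * y 5 - classMap v 6 * y 6 := by
  simp only [classMap_apply, Finset.sum_mul, ← Finset.sum_sub_distrib]
  refine Finset.sum_congr rfl fun L _ => ?_
  simp only [B]
  push_cast
  ring

theorem sum_form_zero {v : Vq} (hv : classMap v = 0) (y : Fin 7 → ℤ) :
    ∑ L, v L * (B L y : ℚ) = 0 := by
  rw [sum_form, hv]; simp

theorem sum_zero_of_ker {v : Vq} (hv : classMap v = 0) : ∑ L, v L = 0 := by
  have h := sum_form_zero hv K
  have h2 : ∀ L : {L : Fin 7 → ℤ // IsLine L}, v L * (B L K : ℚ) = - v L := by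
    intro L
    rw [L.2.2]; push_cast; ring
  simp only [h2, Finset.sum_neg_distrib] at h
  linarith

theorem chi_lineEquiv (t : Fin 45) (i : Fin 27) :
    chi (triSet t) (lineEquiv i) = if inTri t i then 1 else 0 := by
  simp only [chi, lineEquiv_val, mem_triSet]

theorem recover {v : Vq} (hv : classMap v = 0) :
    v = ∑ t : Fin 45, ((1 / 6 : ℚ) * ∑ L, v L * chi (triSet t) L) • chi (triSet t) := by
  funext M
  obtain ⟨j, rfl⟩ := lineEquiv.surjective M
  have h := sum_form_zero hv (lineVec j)
  rw [← lineEquiv.sum_comp] at h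
  have g : ∀ i, (B (lineVec i) (lineVec j) : ℚ)
      = ∑ t : Fin 45, (if inTri t i && inTri t j then (1 : ℚ) else 0)
        - (if i = j then 6 else 0) := by
    intro i
    have := congrArg (fun z : ℤ => (z : ℚ)) (gram_identity i j)
    push_cast at this
    rw [this]; ring
  simp only [lineEquiv_val, g, mul_sub, Finset.sum_sub_distrib, mul_ite, mul_zero,
    Finset.sum_ite_eq', Finset.mem_univ, if_true, Finset.mul_sum] at h
  rw [Finset.sum_comm] at h
  have h6 : v (lineEquiv j) = (1 / 6) * (v (lineEquiv j) * 6) := by ring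
  rw [h6, ← sub_eq_zero.mp h, Finset.sum_apply, Finset.mul_sum]
  refine Finset.sum_congr rfl fun t _ => ?_
  rw [Pi.smul_apply, smul_eq_mul, chi_lineEquiv, ← lineEquiv.sum_comp, mul_assoc, Finset.sum_mul]
  congr 1
  refine Finset.sum_congr rfl fun i _ => ?_
  rw [chi_lineEquiv]
  cases inTri t i <;> cases inTri t j <;> simp

theorem mem_Vtet_of_ker {v : Vq} (hv : classMap v = 0) : v ∈ Vtet := by
  rw [recover hv]
  exact Submodule.sum_mem _ fun t _ => Submodule.smul_mem _ _
    (Submodule.subset_span ⟨_, triSet_isTriangle t, rfl⟩)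

theorem sum_chi {T : Finset (Fin 7 → ℤ)} (hT : IsTriangle T) (f : (Fin 7 → ℤ) → ℚ) :
    ∑ L, chi T L * f L = ∑ L ∈ T, f L := by
  have h : ∑ L : {L : Fin 7 → ℤ // IsLine L}, chi T L * f L
      = ∑ L ∈ (Finset.univ : Finset {L : Fin 7 → ℤ // IsLine L}).filter
          (fun L => L.1 ∈ T), f L.1 := by
    rw [Finset.sum_filter]
    refine Finset.sum_congr rfl fun L _ => ?_
    simp only [chi]
    split_ifs <;> simp
  rw [h]
  refine Finset.sum_bij (fun L _ => (L : Fin 7 → ℤ)) ?_ ?_ ?_ ?_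
  · intro L hL
    simpa using hL
  · intro L _ M _ h
    exact Subtype.ext h
  · intro L hL
    exact ⟨⟨L, hT.2.1 L hL⟩, by simpa using hL, rfl⟩
  · intro L _
    rfl

theorem classMap_of_Vtet {v : Vq} (hv : v ∈ Vtet) (k : Fin 7) :
    3 * classMap v k = (∑ L, v L) * (-(K k) : ℚ) := by
  induction hv using Submodule.span_induction with
  | mem x hx =>
    obtain ⟨T, hT, rfl⟩ := hx
    have h1 := sum_chi hT (fun _ => 1)
    have h2 := sum_chi hT (fun L => (L k : ℚ))
    have h3 := congrArg (fun z : ℤ => (z : ℚ)) (congrFun hT.2.2 k)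
    simp only [Finset.sum_apply, Pi.neg_apply] at h3
    push_cast at h3
    simp only [mul_one, Finset.sum_const, hT.1] at h1
    rw [classMap_apply, h2, h1, h3]
    simp
  | zero => simp
  | add x y _ _ hx hy =>
    simp only [map_add, Pi.add_apply, Finset.sum_add_distrib]
    linear_combination hx + hy
  | smul c x _ hx =>
    simp only [map_smul, Pi.smul_apply, smul_eq_mul, ← Finset.mul_sum]
    linear_combination c * hx

/-- Coefficients exhibiting each standard basis vector as a combination of lines. -/
def basisCoeff : Fin 7 → Fin 27 → ℤ := ![
  ![0, 0, 0, 0, 1, 1, 1, 0, 0, 0, 0, 0, 0, 0, 0, 0, 0, 0, 0, 0, 0, 0, 0, 0, 0, 0, 0],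
  ![0, 0, 0, 0, 0, 1, 0, 0, 0, 0, 0, 0, 0, 0, 0, 0, 0, 0, 0, 0, 0, 0, 0, 0, 0, 0, 0],
  ![0, 0, 0, 0, 1, 0, 0, 0, 0, 0, 0, 0, 0, 0, 0, 0, 0, 0, 0, 0, 0, 0, 0, 0, 0, 0, 0],
  ![0, 0, 0, 1, 0, 0, 0, 0, 0, 0, 0, 0, 0, 0, 0, 0, 0, 0, 0, 0, 0, 0, 0, 0, 0, 0, 0],
  ![0, 0, 1, 0, 0, 0, 0, 0, 0, 0, 0, 0, 0, 0, 0, 0, 0, 0, 0, 0, 0, 0, 0, 0, 0, 0, 0],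
  ![0, 1, 0, 0, 0, 0, 0, 0, 0, 0, 0, 0, 0, 0, 0, 0, 0, 0, 0, 0, 0, 0, 0, 0, 0, 0, 0],
  ![1, 0, 0, 0, 0, 0, 0, 0, 0, 0, 0, 0, 0, 0, 0, 0, 0, 0, 0, 0, 0, 0, 0, 0, 0, 0, 0]]

theorem basisCoeff_spec : ∀ k l : Fin 7,
    ∑ i, basisCoeff k i * lineVec i l = if k = l then 1 else 0 := by
  decide +kernel

theorem classMap_surjective : Function.Surjective classMap := by
  intro y
  refine ⟨fun L => ∑ k, y k * (basisCoeff k (lineEquiv.symm L) : ℚ), ?_⟩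
  funext l
  rw [classMap_apply, ← lineEquiv.sum_comp]
  simp only [Equiv.symm_apply_apply, lineEquiv_val, Finset.sum_mul]
  rw [Finset.sum_comm]
  have h : ∀ k, ∑ i, y k * (basisCoeff k i : ℚ) * (lineVec i l : ℚ)
      = if k = l then y k else 0 := by
    intro k
    have := congrArg (fun z : ℤ => (z : ℚ)) (basisCoeff_spec k l)
    push_cast at this
    simp only [mul_assoc, ← Finset.mul_sum, this]
    simp
  simp only [h]
  simp

theorem finrank_ker : Module.finrank ℚ (LinearMap.ker classMap) = 20 := by
  have h := LinearMap.finrank_range_add_finrank_ker classMap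
  rw [LinearMap.range_eq_top.mpr classMap_surjective, finrank_top, Module.finrank_fintype_fun_eq_card,
    Module.finrank_fintype_fun_eq_card, ← Fintype.card_congr lineEquiv] at h
  simp only [Fintype.card_fin] at h
  omega

/-- The intersection of `Vtet` with the kernel of the coordinate-sum functional is a
subspace of dimension exactly 20. -/
theorem tetragonal_relations_dim_20 :
    ∃ U : Submodule ℚ Vq,
      (U : Set Vq) = {v : Vq | v ∈ Vtet ∧ ∑ᶠ L : {L : Fin 7 → ℤ // IsLine L}, v L = 0} ∧
      Module.finrank ℚ ↥U = 20 := by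
  refine ⟨LinearMap.ker classMap, ?_, finrank_ker⟩
  ext v
  simp only [SetLike.mem_coe, LinearMap.mem_ker, Set.mem_ofPred_eq, finsum_eq_sum_of_fintype]
  constructor
  · intro hv
    exact ⟨mem_Vtet_of_ker hv, sum_zero_of_ker hv⟩
  · rintro ⟨hv, hs⟩
    funext k
    have h := classMap_of_Vtet hv k
    rw [hs, zero_mul] at h
    simpa using h
end

section
/- Let W be the group of ℤ-linear automorphisms g of V = (Fin 7 → ℤ) satisfying ⟨g x, g y⟩ = ⟨x, y⟩ for all x, y ∈ V and g K = K. Then W has exactly 25 conjugacy classes. -/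
/-- The set of ℤ-linear automorphisms of the lattice preserving the form and fixing `K`:
the Weyl group of `E₆`. -/
def Wset : Set ((Fin 7 → ℤ) ≃ₗ[ℤ] (Fin 7 → ℤ)) :=
  {g | (∀ x y, B (g x) (g y) = B x y) ∧ g K = K}

/-! Strategy: exhibit 25 pairwise non-conjugate elements of `W` (words in simple reflections),
bound the order of each centralizer from above by a stabilizer chain on the 27 lines, and note
that the reciprocals of these bounds add up to 1. By the class equation there is no other class. -/

/-- Vectors of the 27 lines. -/
def lnList : List (Fin 7 → ℤ) :=
  [![0, 1, 0, 0, 0, 0, 0],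
   ![0, 0, 1, 0, 0, 0, 0],
   ![0, 0, 0, 1, 0, 0, 0],
   ![0, 0, 0, 0, 1, 0, 0],
   ![0, 0, 0, 0, 0, 1, 0],
   ![0, 0, 0, 0, 0, 0, 1],
   ![1, -1, -1, 0, 0, 0, 0],
   ![1, -1, 0, -1, 0, 0, 0],
   ![1, -1, 0, 0, -1, 0, 0],
   ![1, -1, 0, 0, 0, -1, 0],
   ![1, -1, 0, 0, 0, 0, -1],
   ![1, 0, -1, -1, 0, 0, 0],
   ![1, 0, -1, 0, -1, 0, 0],
   ![1, 0, -1, 0, 0, -1, 0],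
   ![1, 0, -1, 0, 0, 0, -1],
   ![1, 0, 0, -1, -1, 0, 0],
   ![1, 0, 0, -1, 0, -1, 0],
   ![1, 0, 0, -1, 0, 0, -1],
   ![1, 0, 0, 0, -1, -1, 0],
   ![1, 0, 0, 0, -1, 0, -1],
   ![1, 0, 0, 0, 0, -1, -1],
   ![2, 0, -1, -1, -1, -1, -1],
   ![2, -1, 0, -1, -1, -1, -1],
   ![2, -1, -1, 0, -1, -1, -1],
   ![2, -1, -1, -1, 0, -1, -1],
   ![2, -1, -1, -1, -1, 0, -1],
   ![2, -1, -1, -1, -1, -1, 0]]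

def ln (i : ℕ) : Fin 7 → ℤ := lnList.getD i 0

/-- Table of the intersection numbers plus one, two bits for each. -/
def qTab : ℕ := 665204076552897177974887365705299501078977894065671461210489598469724195363084895664825196989298073321162855064556216417440765799431414087021536554875167479627533749955740613368886929538601859730161198407795551920100003384688345547874080559011178512256045701753895112896174814539963998084754686137706780102472476985863369100893366057736840743584659624922082483924224857590283495597787740015874872125321965432751803350811172841102177379668

def qq (i j : ℕ) : ℕ := (qTab >>> (2 * (27 * i + j))) % 4

/-- Permutations of the lines are coded with five bits for each value. -/
def pp (t i : ℕ) : ℕ := (t >>> (5 * i)) % 32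

/-- The simple roots. -/
def rt (k : ℕ) : Fin 7 → ℤ :=
  [![0, 1, -1, 0, 0, 0, 0], ![0, 0, 1, -1, 0, 0, 0], ![0, 0, 0, 1, -1, 0, 0],
   ![0, 0, 0, 0, 1, -1, 0], ![0, 0, 0, 0, 0, 1, -1]].getD k ![1, -1, -1, -1, 0, 0, 0]

/-- The permutations of the lines given by the simple reflections. -/
def sTab (k : ℕ) : ℕ :=
  [36485633589039511202713541867091552995329,
   36485594606248133195740655282183049675840,
   36484347156846365743250066750134158429216,
   36444428777451536551778056135646047766560,
   35167040674691856469009269070504406386720,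
   25336070423223222700844263461971801774315].getD k 0

/-- The representatives: word, permutation, base, order of the centralizer. -/
def reps : List (List ℕ × ℕ × List ℕ × ℕ) :=
  [([], 36485634846548906633991799739614356408352, [0, 1, 2, 3, 18, 4, 5], 51840),
   ([5], 25336070423223222700844263461971801774315, [0, 1, 2, 3, 4, 5], 1440),
   ([1, 0], 36485592091229342334402884491611067220994, [3, 4, 5, 0, 1, 2], 216),
   ([5, 0], 25336069165713827269566185733262294489447, [0, 1, 2, 3, 4, 5], 192),
   ([5, 2, 1], 25340013972357867615108115704395197521003, [2, 0, 1, 3, 4, 5], 32),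
   ([5, 1, 0], 25336027667903658401255600415373699161446, [0, 1, 2, 3, 4, 5], 36),
   ([4, 2, 0], 35165751727479920146989278208501404994561, [0, 1, 2, 3, 4, 5], 96),
   ([5, 2, 1, 0], 25340015229867263023159134693192485772643, [1, 2, 0, 3, 4, 5], 10),
   ([5, 3, 2, 0], 25382425993004229746748784802536900202855, [5, 0, 2, 1, 3, 4], 16),
   ([4, 3, 1, 0], 35084585781177552004992866614564499915778, [0, 2, 1, 3, 4, 5], 108),
   ([5, 3, 1, 0], 25377233737001026141104087314542634343782, [5, 0, 3, 1, 2, 4], 24),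
   ([5, 3, 2, 1], 25382547971415181739417852098693630729355, [0, 2, 1, 3, 4, 5], 36),
   ([4, 3, 2, 1, 0], 35080598218721246680758257831838592599045, [0, 4, 1, 2, 3, 5], 12),
   ([5, 3, 2, 1, 0], 25382550486433972575014945464907201715556, [5, 0, 4, 3, 1, 2], 8),
   ([5, 4, 2, 1, 0], 26658609401647485950017759413109808897379, [0, 3, 1, 2, 4, 5], 10),
   ([5, 4, 3, 1, 0], 26737033977955369090246890329241568845158, [3, 4, 0, 1, 2, 5], 36),
   ([5, 4, 3, 2, 1, 0], 26743679914780905053729380956539240783205, [0, 5, 4, 3, 1, 2], 12),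
   ([5, 2, 3, 1, 2, 1], 25508741543986825665556364891222832286859, [1, 4, 0, 2, 3, 5], 96),
   ([5, 2, 3, 1, 2, 1, 0], 25508744059005616501268498096607310613860, [1, 5, 2, 3, 0, 4], 12),
   ([5, 4, 2, 3, 1, 2, 1, 0], 26869873484817325150778930191813149166949, [0, 4, 1, 2, 3, 5], 9),
   ([4, 3, 2, 5, 1, 2, 3, 1, 2, 0, 1, 0], 21388174789696594679555240694637347944515, [0, 3, 1, 2, 4, 5], 72),
   ([5, 2, 3, 1, 2, 5, 1, 2, 3, 1, 2, 1], 876686459151753612561703538896456129754, [0, 1, 2, 3, 4, 5], 1152),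
   ([5, 2, 3, 1, 2, 5, 4, 1, 2, 3, 1, 2, 1], 19932480820691690614521820256735839132858, [1, 5, 0, 2, 3, 4], 96),
   ([5, 2, 3, 1, 2, 5, 4, 1, 2, 3, 1, 2, 1, 0], 19932507228388994543404581400142589206341, [0, 1, 2, 3, 4, 5], 36),
   ([4, 3, 2, 5, 2, 3, 4, 1, 2, 3, 0, 1, 2, 5, 4, 1, 2, 3, 0, 1, 2, 0, 1, 0], 2066243599549898814377335855740168693190, [0, 1, 2, 3, 4, 5], 648)]

def wordAct : List ℕ → ℕ → ℕ
  | [], i => i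
  | k :: w, i => pp (sTab k) (wordAct w i)

def testA (t m l : ℕ) : ℕ → ℕ → ℕ → Bool
  | 0, _, _ => true
  | n + 1, x, y => (qq m x == qq l y) && testA t m l n (pp t x) (pp t y)

def testB (t m l : ℕ) : ℕ → ℕ → Bool
  | 0, _ => true
  | n + 1, x => (qq x m == qq x l) && testB t m l n (pp t x)

def cands (t : ℕ) (L : List ℕ) (l : ℕ) : List ℕ :=
  (List.range 27).filter fun m => testA t m l 3 m l && L.all fun p => testB t m l 3 p

def bnd (t : ℕ) : List ℕ → List ℕ → ℕ
  | _, [] => 1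
  | L, l :: R => (cands t L l).length * bnd t (l :: L) R

def pit (t : ℕ) : ℕ → ℕ → ℕ
  | 0, i => i
  | n + 1, i => pit t n (pp t i)

def cnt (t j c : ℕ) : ℕ := ((List.range 27).filter fun i => qq i (pit t j i) == c).length

def invt (t : ℕ) : List ℕ := [cnt t 1 0, cnt t 1 1, cnt t 2 0, cnt t 2 1, cnt t 3 0, cnt t 3 1]

def goodRep (r : List ℕ × ℕ × List ℕ × ℕ) : Bool :=
  r.1.all (fun k => k < 6) &&
  ((List.range 27).all fun i => (wordAct r.1 i == pp r.2.1 i) && decide (pp r.2.1 i < 27)) &&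
  r.2.2.1.all (fun l => l < 27) &&
  ((List.range 6).all fun l => r.2.2.1.contains l) &&
  (bnd r.2.1 [] r.2.2.1 == r.2.2.2) && decide (0 < r.2.2.2)

theorem reps_good : ∀ r ∈ reps, goodRep r = true := by decide +kernel

theorem reps_inv : (reps.map fun r => invt r.2.1).Nodup := by decide +kernel

theorem reps_dvd : ∀ r ∈ reps, r.2.2.2 ∣ 51840 := by decide +kernel

theorem reps_length : reps.length = 25 := by decide +kernel

theorem qq_spec : ∀ i < 27, ∀ j < 27, (qq i j : ℤ) = B (ln i) (ln j) + 1 := by decide +kernel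

theorem ln_inj : ∀ i < 27, ∀ j < 27, ln i = ln j → i = j := by decide +kernel

theorem ln_K : ∀ i < 27, B (ln i) K = -1 := by decide +kernel

theorem rt_spec : ∀ k < 6, B (rt k) (rt k) = -2 ∧ B (rt k) K = 0 := by decide +kernel

theorem sTab_spec : ∀ k < 6, ∀ i < 27, pp (sTab k) i < 27 ∧
    ln i + B (ln i) (rt k) • rt k = ln (pp (sTab k) i) := by decide +kernel

theorem B_comm (x y : Fin 7 → ℤ) : B x y = B y x := by unfold B; ring

theorem B_add_left (x y z : Fin 7 → ℤ) : B (x + y) z = B x z + B y z := by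
  simp only [B, Pi.add_apply]; ring

theorem B_smul_left (c : ℤ) (x z : Fin 7 → ℤ) : B (c • x) z = c * B x z := by
  simp only [B, Pi.smul_apply, smul_eq_mul]; ring

theorem B_add_right (x y z : Fin 7 → ℤ) : B z (x + y) = B z x + B z y := by
  rw [B_comm, B_add_left, B_comm x, B_comm y]

theorem B_smul_right (c : ℤ) (x z : Fin 7 → ℤ) : B z (c • x) = c * B z x := by
  rw [B_comm, B_smul_left, B_comm x]

/-- The group `W`. -/
def WW : Subgroup ((Fin 7 → ℤ) ≃ₗ[ℤ] (Fin 7 → ℤ)) where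
  carrier := Wset
  mul_mem' := by
    rintro a b ⟨ha, ha'⟩ ⟨hb, hb'⟩
    refine ⟨fun x y => ?_, ?_⟩
    · rw [LinearEquiv.mul_apply, LinearEquiv.mul_apply, ha, hb]
    · rw [LinearEquiv.mul_apply, hb', ha']
  one_mem' := ⟨fun _ _ => rfl, rfl⟩
  inv_mem' := by
    rintro a ⟨ha, ha'⟩
    have h : ∀ x, a (a⁻¹ x) = x := fun x => a.apply_symm_apply x
    refine ⟨fun x y => ?_, ?_⟩
    · rw [← ha, h, h]
    · apply a.injective
      rw [h, ha']

def reflMap (a : Fin 7 → ℤ) : (Fin 7 → ℤ) →ₗ[ℤ] (Fin 7 → ℤ) where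
  toFun x := x + B x a • a
  map_add' x y := by rw [B_add_left, add_smul]; abel
  map_smul' c x := by rw [B_smul_left, mul_smul, RingHom.id_apply, smul_add]

theorem reflMap_invol (a : Fin 7 → ℤ) (h : B a a = -2) : Function.Involutive (reflMap a) := by
  intro x
  change (x + B x a • a) + B (x + B x a • a) a • a = x
  rw [B_add_left, B_smul_left, h, add_assoc, ← add_smul]
  have : B x a + (B x a + B x a * -2) = 0 := by ring
  rw [this, zero_smul, add_zero]

/-- The simple reflections as elements of the group. -/
def sRefl (k : ℕ) (hk : k < 6) : WW :=
  ⟨LinearEquiv.ofInvolutive (reflMap (rt k)) (reflMap_invol _ (rt_spec k hk).1), by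
    constructor
    · intro x y
      change B (x + B x (rt k) • rt k) (y + B y (rt k) • rt k) = B x y
      simp only [B_add_left, B_add_right, B_smul_left, B_smul_right, (rt_spec k hk).1,
        B_comm (rt k) y]
      ring
    · change K + B K (rt k) • rt k = K
      rw [B_comm, (rt_spec k hk).2, zero_smul, add_zero]⟩

theorem sRefl_ln (k : ℕ) (hk : k < 6) (i : ℕ) (hi : i < 27) :
    (sRefl k hk).1 (ln i) = ln (pp (sTab k) i) := (sTab_spec k hk i hi).2

theorem exists_word (w : List ℕ) (hw : ∀ k ∈ w, k < 6) :
    ∃ g : WW, ∀ i < 27, wordAct w i < 27 ∧ g.1 (ln i) = ln (wordAct w i) := by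
  induction w with
  | nil => exact ⟨1, fun i hi => ⟨hi, rfl⟩⟩
  | cons k w ih =>
    obtain ⟨g, hg⟩ := ih fun k hk => hw k (List.mem_cons_of_mem _ hk)
    have hk : k < 6 := hw k List.mem_cons_self
    refine ⟨sRefl k hk * g, fun i hi => ?_⟩
    obtain ⟨h1, h2⟩ := hg i hi
    refine ⟨(sTab_spec k hk _ h1).1, ?_⟩
    change (sRefl k hk).1 (g.1 (ln i)) = _
    rw [h2, sRefl_ln k hk _ h1]
    rfl

theorem bin_cases (s : ℤ) (hs : s = 1 ∨ s = -1) (a b c d e f : ℤ)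
    (h : a ^ 2 + b ^ 2 + c ^ 2 + d ^ 2 + e ^ 2 + f ^ 2 = s * (a + b + c + d + e + f)) :
    (a = 0 ∨ a = s) ∧ (b = 0 ∨ b = s) ∧ (c = 0 ∨ c = s) ∧ (d = 0 ∨ d = s) ∧ (e = 0 ∨ e = s) ∧
      (f = 0 ∨ f = s) := by
  have key : ∀ x : ℤ, 0 ≤ x ^ 2 - s * x := by
    intro x
    rcases hs with rfl | rfl
    · rcases le_or_gt x 0 with h | h <;> nlinarith
    · rcases lt_or_ge x 0 with h | h <;> nlinarith
  have fin : ∀ x : ℤ, x ^ 2 - s * x ≤ 0 → x = 0 ∨ x = s := by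
    intro x hx
    have : x * (x - s) = 0 := by linarith [key x]
    rcases mul_eq_zero.1 this with h | h
    · exact Or.inl h
    · exact Or.inr (by linarith)
  have ka := key a
  have kb := key b
  have kc := key c
  have kd := key d
  have ke := key e
  have kf := key f
  refine ⟨fin _ ?_, fin _ ?_, fin _ ?_, fin _ ?_, fin _ ?_, fin _ ?_⟩ <;> linarith

theorem enum_lines_s6 : ∀ p ∈ [((0 : ℤ), (1 : ℤ)), (1, -1), (2, -1)],
    ∀ a ∈ [0, p.2], ∀ b ∈ [0, p.2], ∀ c ∈ [0, p.2], ∀ d ∈ [0, p.2], ∀ e ∈ [0, p.2],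
    ∀ f ∈ [0, p.2], a + b + c + d + e + f = 1 - 3 * p.1 →
    ∃ i < 27, ln i = ![p.1, a, b, c, d, e, f] := by decide +kernel

theorem mem_lines (x : Fin 7 → ℤ) (h1 : B x x = -1) (h2 : B x K = -1) :
    ∃ i < 27, ln i = x := by
  obtain ⟨z, a, b, c, d, e, f, rfl⟩ : ∃ z a b c d e f, x = ![z, a, b, c, d, e, f] :=
    ⟨x 0, x 1, x 2, x 3, x 4, x 5, x 6, by ext i; fin_cases i <;> rfl⟩
  have h1' : z * z - a * a - b * b - c * c - d * d - e * e - f * f = -1 := h1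
  have h2' : z * (-3) - a * 1 - b * 1 - c * 1 - d * 1 - e * 1 - f * 1 = -1 := h2
  have hs : a + b + c + d + e + f = 1 - 3 * z := by linarith
  have hq : a ^ 2 + b ^ 2 + c ^ 2 + d ^ 2 + e ^ 2 + f ^ 2 = z ^ 2 + 1 := by linarith
  have hcs : (a + b + c + d + e + f) ^ 2 ≤
      6 * (a ^ 2 + b ^ 2 + c ^ 2 + d ^ 2 + e ^ 2 + f ^ 2) := by
    nlinarith [sq_nonneg (a - b), sq_nonneg (a - c), sq_nonneg (a - d), sq_nonneg (a - e),
      sq_nonneg (a - f), sq_nonneg (b - c), sq_nonneg (b - d), sq_nonneg (b - e),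
      sq_nonneg (b - f), sq_nonneg (c - d), sq_nonneg (c - e), sq_nonneg (c - f),
      sq_nonneg (d - e), sq_nonneg (d - f), sq_nonneg (e - f)]
  rw [hs, hq] at hcs
  have hz0 : 0 ≤ z := by
    by_contra hz
    nlinarith
  have hz2 : z ≤ 2 := by
    by_contra hz
    nlinarith
  have main : ∀ s : ℤ, (z, s) ∈ [((0 : ℤ), (1 : ℤ)), (1, -1), (2, -1)] → (s = 1 ∨ s = -1) →
      z ^ 2 + 1 = s * (1 - 3 * z) → ∃ i < 27, ln i = ![z, a, b, c, d, e, f] := by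
    intro s hm hs1 he
    obtain ⟨ha, hb, hc, hd, he, hf⟩ := bin_cases s hs1 a b c d e f (by rw [hq, hs, he])
    exact enum_lines_s6 (z, s) hm a (by simpa using ha) b (by simpa using hb) c (by simpa using hc)
      d (by simpa using hd) e (by simpa using he) f (by simpa using hf) hs
  interval_cases z
  · exact main 1 (by simp) (by simp) (by norm_num)
  · exact main (-1) (by simp) (by simp) (by norm_num)
  · exact main (-1) (by simp) (by simp) (by norm_num)

theorem ln_sq (i : ℕ) (hi : i < 27) : B (ln i) (ln i) = -1 := by
  have h : ∀ i < 27, B (ln i) (ln i) = -1 := by decide +kernel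
  exact h i hi

theorem exists_img (h : WW) (i : ℕ) (hi : i < 27) : ∃ m < 27, h.1 (ln i) = ln m := by
  obtain ⟨m, hm, e⟩ := mem_lines (h.1 (ln i)) (by rw [h.2.1, ln_sq i hi])
    (by conv_lhs => rw [← h.2.2, h.2.1, ln_K i hi])
  exact ⟨m, hm, e.symm⟩

theorem eq_one_of_fix (h : WW) (hf : ∀ i < 6, h.1 (ln i) = ln i) : h = 1 := by
  have h0 : ∀ i : Fin 6, h.1 (Pi.single i.succ 1) = Pi.single i.succ 1 := by
    intro i
    have : ∀ i : Fin 6, ln i = Pi.single i.succ 1 := by decide +kernel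
    rw [← this]
    exact hf i i.2
  have hK := h.2.2
  have eK : K = (-3 : ℤ) • Pi.single 0 1 + ∑ i : Fin 6, Pi.single i.succ 1 := by decide +kernel
  rw [eK, map_add, map_sum, map_smul, Finset.sum_congr rfl fun i _ => h0 i] at hK
  have h3 : h.1 (Pi.single 0 1) = Pi.single 0 1 :=
    smul_right_injective _ (by norm_num : (-3 : ℤ) ≠ 0) (add_right_cancel hK)
  apply Subtype.ext
  apply LinearEquiv.toLinearMap_injective
  apply LinearMap.pi_ext'
  intro i
  ext1
  refine Fin.cases ?_ (fun i => ?_) i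
  · exact h3
  · exact h0 i

instance WW_finite : Finite WW := by
  choose f hf hf' using fun (h : WW) (i : Fin 6) => exists_img h i (by omega)
  refine Finite.of_injective (fun h => fun i => (⟨f h i, hf h i⟩ : Fin 27)) ?_
  intro a b hab
  have : a⁻¹ * b = 1 := by
    apply eq_one_of_fix
    intro i hi
    have e : a.1 (ln i) = b.1 (ln i) := by
      have := hf' a ⟨i, hi⟩
      have h2 := hf' b ⟨i, hi⟩
      have h3 := congrArg Fin.val (congrFun hab ⟨i, hi⟩)
      simp only at this h2 h3
      rw [this, h2, h3]
    change a.1⁻¹ (b.1 (ln i)) = ln i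
    rw [← e]
    exact a.1.symm_apply_apply _
  exact (inv_mul_eq_one.1 this)

/-- `g` acts on the lines through the coded permutation `t`. -/
def Acts (g : WW) (t : ℕ) : Prop := ∀ i < 27, pp t i < 27 ∧ g.1 (ln i) = ln (pp t i)

theorem qq_eq {i j k l : ℕ} (hi : i < 27) (hj : j < 27) (hk : k < 27) (hl : l < 27)
    (h : B (ln i) (ln j) = B (ln k) (ln l)) : qq i j = qq k l := by
  have h1 := qq_spec i hi j hj
  have h2 := qq_spec k hk l hl
  rw [h, ← h2] at h1
  exact_mod_cast h1

theorem comm_apply {g h : WW} (c : Commute h g) (x : Fin 7 → ℤ) :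
    h.1 (g.1 x) = g.1 (h.1 x) := by
  have := congrArg (fun u : WW => u.1 x) c.eq
  exact this

theorem testA_of {g h : WW} {t m l : ℕ} (hg : Acts g t) (c : Commute h g) (hm : m < 27)
    (hl : l < 27) (e : h.1 (ln l) = ln m) (n x y : ℕ) (hx : x < 27) (hy : y < 27)
    (exy : h.1 (ln y) = ln x) : testA t m l n x y = true := by
  induction n generalizing x y with
  | zero => rfl
  | succ n ih =>
    rw [testA, Bool.and_eq_true]
    refine ⟨?_, ih _ _ (hg x hx).1 (hg y hy).1 ?_⟩
    · rw [beq_iff_eq]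
      apply qq_eq hm hx hl hy
      rw [← e, ← exy, h.2.1]
    · rw [← (hg y hy).2, ← (hg x hx).2, comm_apply c, exy]

theorem testB_of {g h : WW} {t m l : ℕ} (hg : Acts g t) (c : Commute h g) (hm : m < 27)
    (hl : l < 27) (e : h.1 (ln l) = ln m) (n x : ℕ) (hx : x < 27)
    (exy : h.1 (ln x) = ln x) : testB t m l n x = true := by
  induction n generalizing x with
  | zero => rfl
  | succ n ih =>
    rw [testB, Bool.and_eq_true]
    refine ⟨?_, ih _ (hg x hx).1 ?_⟩
    · rw [beq_iff_eq]
      apply qq_eq hx hm hx hl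
      rw [← e]
      conv_lhs => rw [← exy]
      rw [h.2.1]
    · rw [← (hg x hx).2, comm_apply c, exy]

/-- Elements of the centralizer of `g` fixing the lines in `L`. -/
def Stab (g : WW) (L : List ℕ) : Set WW := {h | Commute h g ∧ ∀ i ∈ L, h.1 (ln i) = ln i}

theorem stab_step {g : WW} {t : ℕ} (hg : Acts g t) (L : List ℕ) (hL : ∀ p ∈ L, p < 27) (l : ℕ)
    (hl : l < 27) :
    (Stab g L).ncard ≤ (cands t L l).length * (Stab g (l :: L)).ncard := by
  classical
  have hfin : ∀ S : Set WW, S.Finite := fun S => S.toFinite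
  set s : Finset WW := (hfin (Stab g L)).toFinset with hs
  have hmem : ∀ h, h ∈ s ↔ h ∈ Stab g L := fun h => Set.Finite.mem_toFinset _
  rw [Set.ncard_eq_toFinset_card _ (hfin (Stab g L)), ← hs]
  have himg : (s.image fun h => h.1 (ln l)) ⊆ ((cands t L l).map ln).toFinset := by
    intro v hv
    obtain ⟨h, hh, rfl⟩ := Finset.mem_image.1 hv
    rw [hmem] at hh
    obtain ⟨m, hm, e⟩ := exists_img h l hl
    rw [List.mem_toFinset, e]
    apply List.mem_map_of_mem
    rw [cands, List.mem_filter, List.mem_range, Bool.and_eq_true, List.all_eq_true]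
    exact ⟨hm, testA_of hg hh.1 hm hl e _ _ _ hm hl e,
      fun p hp => testB_of hg hh.1 hm hl e _ _ (hL p hp) (hh.2 p hp)⟩
  have hcard : (s.image fun h => h.1 (ln l)).card ≤ (cands t L l).length := by
    refine (Finset.card_le_card himg).trans ((List.toFinset_card_le _).trans ?_)
    rw [List.length_map]
  have hfib : ∀ v ∈ s.image fun h => h.1 (ln l),
      (s.filter fun h => h.1 (ln l) = v).card ≤ (Stab g (l :: L)).ncard := by
    intro v hv
    obtain ⟨h0, hh0, rfl⟩ := Finset.mem_image.1 hv
    rw [hmem] at hh0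
    rw [← Set.ncard_coe_finset]
    refine Set.ncard_le_ncard_of_injOn (fun h => h0⁻¹ * h) ?_ ?_ (hfin _)
    · intro h hh
      have hh' := Finset.mem_filter.1 (Finset.mem_coe.1 hh)
      rw [hmem] at hh'
      obtain ⟨⟨hc, hf⟩, he⟩ := hh'
      have key : ∀ x, h.1 x = h0.1 x → (h0⁻¹ * h).1 x = x := by
        intro x hx
        change h0.1⁻¹ (h.1 x) = x
        rw [hx]
        exact h0.1.symm_apply_apply _
      refine ⟨hh0.1.inv_left.mul_left hc, fun i hi => key _ ?_⟩
      rcases List.mem_cons.1 hi with rfl | hi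
      · exact he
      · rw [hf i hi, hh0.2 i hi]
    · intro a _ b _ hab
      exact mul_left_cancel hab
  have := Finset.card_le_mul_card_image (f := fun h : WW => h.1 (ln l)) s _ hfib
  refine this.trans ?_
  rw [mul_comm]
  exact Nat.mul_le_mul_right _ hcard

theorem stab_bnd {g : WW} {t : ℕ} (hg : Acts g t) (R L : List ℕ) (hL : ∀ p ∈ L, p < 27)
    (hR : ∀ p ∈ R, p < 27) (h6 : ∀ i < 6, i ∈ L ∨ i ∈ R) :
    (Stab g L).ncard ≤ bnd t L R := by
  induction R generalizing L with
  | nil =>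
    have : Stab g L ⊆ {1} := by
      intro h hh
      refine eq_one_of_fix h fun i hi => hh.2 i ?_
      simpa using h6 i hi
    exact (Set.ncard_le_ncard this).trans (by rw [Set.ncard_singleton]; rfl)
  | cons l R ih =>
    rw [bnd]
    refine (stab_step hg L hL l (hR l List.mem_cons_self)).trans (Nat.mul_le_mul_left _ ?_)
    refine ih (l :: L) ?_ (fun p hp => hR p (List.mem_cons_of_mem _ hp)) ?_
    · intro p hp
      rcases List.mem_cons.1 hp with rfl | hp
      · exact hR _ List.mem_cons_self
      · exact hL p hp
    · intro i hi
      have := h6 i hi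
      simp only [List.mem_cons] at this ⊢
      tauto

/-- The conjugation invariants on the level of the lattice. -/
noncomputable def cntV (g : WW) (j c : ℕ) : ℕ :=
  {v : Fin 7 → ℤ | B v v = -1 ∧ B v K = -1 ∧ B v ((g ^ j).1 v) + 1 = c}.ncard

theorem cntV_conj (h g : WW) (j c : ℕ) : cntV (h * g * h⁻¹) j c = cntV g j c := by
  have e : {v : Fin 7 → ℤ | B v v = -1 ∧ B v K = -1 ∧ B v (((h * g * h⁻¹) ^ j).1 v) + 1 = c} =
      Set.image h.1 {v : Fin 7 → ℤ | B v v = -1 ∧ B v K = -1 ∧ B v ((g ^ j).1 v) + 1 = c} := by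
    rw [conj_pow]
    ext v
    have e1 : h.1 (h.1.symm v) = v := h.1.apply_symm_apply v
    have ex : ∀ u, h.1 u = v → ((B v v = -1 ∧ B v K = -1 ∧
        B v ((h * g ^ j * h⁻¹).1 v) + 1 = c) ↔
        (B u u = -1 ∧ B u K = -1 ∧ B u ((g ^ j).1 u) + 1 = c)) := by
      rintro u rfl
      have a1 : (h * g ^ j * h⁻¹).1 (h.1 u) = h.1 ((g ^ j).1 u) := by
        change h.1 ((g ^ j).1 (h.1.symm (h.1 u))) = _
        rw [h.1.symm_apply_apply]
      have a2 : B (h.1 u) K = B u K := by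
        conv_lhs => rw [← h.2.2, h.2.1]
      rw [a1, a2, h.2.1, h.2.1]
    constructor
    · intro hv
      exact ⟨_, (ex _ e1).1 hv, e1⟩
    · rintro ⟨u, hu, huv⟩
      exact (ex u huv).2 hu
  rw [cntV, e, Set.ncard_image_of_injective _ h.1.injective]
  rfl

theorem pit_spec {g : WW} {t : ℕ} (hg : Acts g t) (j i : ℕ) (hi : i < 27) :
    pit t j i < 27 ∧ (g ^ j).1 (ln i) = ln (pit t j i) := by
  induction j generalizing i with
  | zero => exact ⟨hi, rfl⟩
  | succ j ih =>
    obtain ⟨h1, h2⟩ := ih _ (hg i hi).1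
    refine ⟨h1, ?_⟩
    rw [pow_succ]
    change (g ^ j).1 (g.1 (ln i)) = _
    rw [(hg i hi).2, h2]
    rfl

theorem cntV_eq {g : WW} {t : ℕ} (hg : Acts g t) (j c : ℕ) : cntV g j c = cnt t j c := by
  have e : {v : Fin 7 → ℤ | B v v = -1 ∧ B v K = -1 ∧ B v ((g ^ j).1 v) + 1 = c} =
      Set.image ln (((List.range 27).filter fun i => qq i (pit t j i) == c).toFinset : Set ℕ) := by
    ext v
    have key : ∀ i < 27, (B (ln i) ((g ^ j).1 (ln i)) + 1 = c ↔ qq i (pit t j i) = c) := by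
      intro i hi
      obtain ⟨h1, h2⟩ := pit_spec hg j i hi
      rw [h2, ← qq_spec i hi _ h1]
      exact Nat.cast_inj
    simp only [Set.mem_ofPred_eq, Set.mem_image, Finset.mem_coe, List.mem_toFinset,
      List.mem_filter, List.mem_range, beq_iff_eq]
    constructor
    · rintro ⟨h1, h2, h3⟩
      obtain ⟨i, hi, rfl⟩ := mem_lines v h1 h2
      exact ⟨i, ⟨hi, (key i hi).1 h3⟩, rfl⟩
    · rintro ⟨i, ⟨hi, h3⟩, rfl⟩
      exact ⟨ln_sq i hi, ln_K i hi, (key i hi).2 h3⟩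
  rw [cntV, e, Set.InjOn.ncard_image, Set.ncard_coe_finset, List.toFinset_card_of_nodup]
  · rfl
  · exact List.nodup_range.filter _
  · intro a ha b hb hab
    simp only [Finset.mem_coe, List.mem_toFinset, List.mem_filter, List.mem_range] at ha hb
    exact ln_inj a ha.1 b hb.1 hab

theorem invt_conj {g g' : WW} {t t' : ℕ} (hg : Acts g t) (hg' : Acts g' t')
    (c : IsConj g g') : invt t = invt t' := by
  obtain ⟨h, rfl⟩ := isConj_iff.1 c
  have : ∀ j k, cnt t j k = cnt t' j k := fun j k => by
    rw [← cntV_eq hg, ← cntV_eq hg', cntV_conj]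
  simp only [invt, this]

theorem rep_exists (r : List ℕ × ℕ × List ℕ × ℕ) (hr : goodRep r = true) :
    ∃ g : WW, Acts g r.2.1 ∧ (Stab g []).ncard ≤ r.2.2.2 := by
  simp only [goodRep, Bool.and_eq_true, List.all_eq_true, decide_eq_true_eq, beq_iff_eq,
    List.mem_range, List.contains_iff_mem] at hr
  obtain ⟨⟨⟨⟨⟨h1, h2⟩, h3⟩, h4⟩, h5⟩, h6⟩ := hr
  obtain ⟨g, hg⟩ := exists_word r.1 h1
  have ha : Acts g r.2.1 := by
    intro i hi
    obtain ⟨e, l⟩ := h2 i hi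
    exact ⟨l, by rw [← e]; exact (hg i hi).2⟩
  refine ⟨g, ha, ?_⟩
  rw [← h5]
  exact stab_bnd ha _ _ (by simp) h3 fun i hi => Or.inr (h4 i hi)

theorem class_card (g : WW) :
    Nat.card WW ≤ (Stab g []).ncard * (ConjClasses.mk g).carrier.ncard := by
  classical
  have := Fintype.ofFinite WW
  have hfib : ∀ v ∈ (Finset.univ : Finset WW).image fun h => h * g * h⁻¹,
      (Finset.univ.filter fun h : WW => h * g * h⁻¹ = v).card ≤ (Stab g []).ncard := by
    intro v hv
    obtain ⟨h0, -, rfl⟩ := Finset.mem_image.1 hv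
    rw [← Set.ncard_coe_finset]
    refine Set.ncard_le_ncard_of_injOn (fun h => h0⁻¹ * h) ?_ ?_ (Set.toFinite _)
    · intro h hh
      have hh' : h * g * h⁻¹ = h0 * g * h0⁻¹ := (Finset.mem_filter.1 (Finset.mem_coe.1 hh)).2
      refine ⟨?_, by simp⟩
      change h0⁻¹ * h * g = g * (h0⁻¹ * h)
      have h2 : h * g = h0 * g * h0⁻¹ * h := by rw [← hh']; group
      rw [mul_assoc, h2]
      group
    · intro a _ b _ hab
      exact mul_left_cancel hab
  have h1 := Finset.card_le_mul_card_image (f := fun h : WW => h * g * h⁻¹) _ _ hfib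
  rw [Finset.card_univ, ← Nat.card_eq_fintype_card] at h1
  refine h1.trans (Nat.mul_le_mul_left _ ?_)
  rw [← Set.ncard_coe_finset]
  refine Set.ncard_le_ncard ?_ (Set.toFinite _)
  intro v hv
  obtain ⟨h0, -, rfl⟩ := Finset.mem_image.1 (Finset.mem_coe.1 hv)
  rw [ConjClasses.mem_carrier_iff_mk_eq, ConjClasses.mk_eq_mk_iff_isConj]
  exact (isConj_iff.2 ⟨h0, rfl⟩).symm

theorem reps_sum_fin : ∑ i : Fin reps.length, 51840 / (reps.get i).2.2.2 = 51840 := by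
  decide +kernel

theorem card_of_le {n : ℕ} (g : Fin n → WW)
    (hinj : Function.Injective fun i => ConjClasses.mk (g i))
    (hle : Nat.card WW ≤ ∑ i, (ConjClasses.mk (g i)).carrier.ncard) :
    Nat.card (ConjClasses WW) = n := by
  classical
  have : Finite (ConjClasses WW) := Finite.of_surjective _ ConjClasses.mk_surjective
  have := Fintype.ofFinite (ConjClasses WW)
  have hsum := Group.sum_card_conj_classes_eq_card WW
  rw [finsum_eq_sum_of_fintype] at hsum
  have hsurj : Function.Surjective fun i => ConjClasses.mk (g i) := by
    intro c
    by_contra hc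
    have h4 : ∑ i, (ConjClasses.mk (g i)).carrier.ncard =
        ∑ x ∈ Finset.univ.image fun i => ConjClasses.mk (g i), x.carrier.ncard := by
      rw [Finset.sum_image fun i _ j _ h => hinj h]
    have hn : c ∉ Finset.univ.image fun i => ConjClasses.mk (g i) := by
      intro h
      obtain ⟨i, -, h⟩ := Finset.mem_image.1 h
      exact hc ⟨i, h⟩
    have h5 := Finset.sum_le_sum_of_subset (f := fun x : ConjClasses WW => x.carrier.ncard)
      (Finset.subset_univ (insert c (Finset.univ.image fun i => ConjClasses.mk (g i))))
    rw [Finset.sum_insert hn, ← h4] at h5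
    have h6 : 0 < c.carrier.ncard := by
      rw [Set.ncard_pos (Set.toFinite _)]
      obtain ⟨a, rfl⟩ := ConjClasses.mk_surjective c
      exact ⟨a, ConjClasses.mem_carrier_mk⟩
    omega
  rw [← Nat.card_eq_of_bijective _ ⟨hinj, hsurj⟩, Nat.card_fin]

theorem card_classes : Nat.card (ConjClasses WW) = 25 := by
  classical
  choose g hg hb using fun i : Fin reps.length =>
    rep_exists (reps.get i) (reps_good _ (reps.get_mem i))
  have hinj : Function.Injective fun i => ConjClasses.mk (g i) := by
    intro i j hij
    have h1 := invt_conj (hg i) (hg j) (ConjClasses.mk_eq_mk_iff_isConj.1 hij)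
    have h2 := List.nodup_iff_injective_get.1 reps_inv
    have h3 := @h2 ⟨i, by simp⟩ ⟨j, by simp⟩ (by simpa using h1)
    ext
    simpa using h3
  have hle : Nat.card WW ≤ ∑ i, (ConjClasses.mk (g i)).carrier.ncard := by
    have : ∀ i, Nat.card WW * (51840 / (reps.get i).2.2.2) ≤
        51840 * (ConjClasses.mk (g i)).carrier.ncard := by
      intro i
      obtain ⟨d, hd⟩ := reps_dvd _ (reps.get_mem i)
      have hc : 0 < (reps.get i).2.2.2 := by
        rcases Nat.eq_zero_or_pos (reps.get i).2.2.2 with h | h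
        · rw [h] at hd; omega
        · exact h
      have h1 := (class_card (g i)).trans (Nat.mul_le_mul_right _ (hb i))
      have h2 : 51840 / (reps.get i).2.2.2 = d := Nat.div_eq_of_eq_mul_right hc hd
      rw [h2]
      calc Nat.card WW * d ≤ _ := Nat.mul_le_mul_right d h1
        _ = (reps.get i).2.2.2 * d * (ConjClasses.mk (g i)).carrier.ncard := by ring
        _ = _ := by rw [← hd]
    have h3 := Finset.sum_le_sum fun i (_ : i ∈ Finset.univ) => this i
    rw [← Finset.mul_sum, ← Finset.mul_sum, reps_sum_fin] at h3
    rw [mul_comm] at h3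
    exact Nat.le_of_mul_le_mul_left h3 (by norm_num)
  rw [card_of_le _ hinj hle, reps_length]

/-- The Weyl group of `E₆`, realized as the form-preserving automorphisms of the
lattice fixing `K`, has exactly 25 conjugacy classes. -/
theorem weyl_group_conj_classes :
    ∃ W : Subgroup ((Fin 7 → ℤ) ≃ₗ[ℤ] (Fin 7 → ℤ)),
      (W : Set ((Fin 7 → ℤ) ≃ₗ[ℤ] (Fin 7 → ℤ))) = Wset ∧
        Nat.card (ConjClasses ↥W) = 25 := by
  exact ⟨WW, rfl, card_classes⟩
end
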